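/- (Fubini–Tonelli for the Riesz construction) Let μ and ν be finite measures on semirings P in X and Q in Y. Then P×Q := {P×Q : P ∈ P, Q ∈ Q} is a semiring in X×Y and (μ×ν)(P×Q) := μ(P)ν(Q) defines a finite measure on it; moreover, for every f ∈ R₂(X×Y) (i.e., whenever the double integral ∫_{X×Y} f d(μ×ν) is defined, possibly infinite), for almost every x the section f(x,·) lies in R₂(Y), the function x ↦ ∫_Y f(x,y) dy lies in R₂(X), and ∫_{X×Y} f dx dy = ∫_X (∫_Y f(x,y) dy) dx. -/

import Mathlib

open Filter Set

/-- A semiring of sets. -/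
structure IsSemiring {X : Type*} (P : Set (Set X)) : Prop where
  empty_mem : ∅ ∈ P
  inter_mem : ∀ ⦃A B : Set X⦄, A ∈ P → B ∈ P → A ∩ B ∈ P
  diff_eq : ∀ ⦃A B : Set X⦄, A ∈ P → B ∈ P →
    ∃ (n : ℕ) (C : Fin n → Set X), (∀ i, C i ∈ P) ∧
      Pairwise (Function.onFun Disjoint C) ∧ A \ B = ⋃ i, C i

/-- A finite (real-valued, nonnegative, σ-additive) measure on a semiring. -/
structure IsPremeasure {X : Type*} (P : Set (Set X)) (m : Set X → ℝ) : Prop where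
  nonneg : ∀ ⦃A : Set X⦄, A ∈ P → 0 ≤ m A
  empty : m ∅ = 0
  sigma_additive : ∀ (A : Set X) (B : ℕ → Set X), A ∈ P → (∀ n, B n ∈ P) →
    Pairwise (Function.onFun Disjoint B) → A = (⋃ n, B n) →
    HasSum (fun n => m (B n)) (m A)

/-- `N` is a null set for the measure `m` on the semiring `P`. -/
def NullFor {X : Type*} (P : Set (Set X)) (m : Set X → ℝ) (N : Set X) : Prop :=
  ∀ ε > 0, ∃ B : ℕ → Set X, (∀ n, B n ∈ P) ∧ N ⊆ (⋃ n, B n) ∧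
    ∃ L : ℝ, HasSum (fun n => m (B n)) L ∧ L < ε

/-- A property holds almost everywhere w.r.t. `(P, m)`. -/
def AEFor {X : Type*} (P : Set (Set X)) (m : Set X → ℝ) (Pr : X → Prop) : Prop :=
  NullFor P m {x | ¬ Pr x}

/-- `φ` is a step function over `P` with elementary integral `v`. -/
def StepIntP {X : Type*} (P : Set (Set X)) (m : Set X → ℝ)
    (φ : X → ℝ) (v : ℝ) : Prop :=
  ∃ (n : ℕ) (c : Fin n → ℝ) (A : Fin n → Set X), (∀ i, A i ∈ P) ∧
    (∀ x, φ x = ∑ i, c i * (A i).indicator 1 x) ∧ v = ∑ i, c i * m (A i)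

/-- `f ∈ R₁` over `(P, m)` with integral `I`: `f` is an a.e. nondecreasing
limit of step functions whose integrals tend to `I`. -/
def R1IntP {X : Type*} (P : Set (Set X)) (m : Set X → ℝ)
    (f : X → EReal) (I : EReal) : Prop :=
  ∃ (φ : ℕ → X → ℝ) (v : ℕ → ℝ), (∀ n, StepIntP P m (φ n) (v n)) ∧
    AEFor P m (fun x => Monotone (fun n => φ n x) ∧
      Tendsto (fun n => (φ n x : EReal)) atTop (nhds (f x))) ∧
    Tendsto (fun n => (v n : EReal)) atTop (nhds I)

/-- `f ∈ R₂` over `(P, m)` with integral `J = I₁ − I₂`. -/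
def R2IntP {X : Type*} (P : Set (Set X)) (m : Set X → ℝ)
    (f : X → EReal) (J : EReal) : Prop :=
  ∃ f₁ f₂ I₁ I₂, R1IntP P m f₁ I₁ ∧ R1IntP P m f₂ I₂ ∧ (I₁ ≠ ⊤ ∨ I₂ ≠ ⊤) ∧
    AEFor P m (fun x => f x = f₁ x - f₂ x) ∧ J = I₁ - I₂

/-- The product semiring of rectangles. -/
def ProdSemiring {X Y : Type*} (P : Set (Set X)) (Q : Set (Set Y)) :
    Set (Set (X × Y)) :=
  {S | ∃ A ∈ P, ∃ B ∈ Q, S = A ×ˢ B}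

open MeasureTheory
open scoped ENNReal

theorem IsSemiring.toSet {X : Type*} {P : Set (Set X)} (hP : IsSemiring P) :
    IsSetSemiring P where
  empty_mem := hP.empty_mem
  inter_mem s hs t ht := hP.inter_mem hs ht
  sdiff_eq_sUnion' s hs t ht := by
    classical
    obtain ⟨n, C, hC, hd, he⟩ := hP.diff_eq hs ht
    refine ⟨Finset.univ.image C, ?_, ?_, ?_⟩
    · intro A hA
      simp only [Finset.coe_image, Finset.coe_univ, Set.image_univ, Set.mem_range] at hA
      obtain ⟨i, rfl⟩ := hA
      exact hC i
    · intro A hA B hB hAB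
      simp only [Finset.coe_image, Finset.coe_univ, Set.image_univ, Set.mem_range] at hA hB
      obtain ⟨i, rfl⟩ := hA
      obtain ⟨j, rfl⟩ := hB
      exact hd (fun h => hAB (by rw [h]))
    · rw [he]; simp

theorem IsPremeasure.csum {X ι : Type*} [Countable ι] {P : Set (Set X)} {m : Set X → ℝ}
    (hP : IsSemiring P) (hm : IsPremeasure P m) (A : Set X) (B : ι → Set X) (hA : A ∈ P)
    (hB : ∀ i, B i ∈ P) (hd : Pairwise (Function.onFun Disjoint B)) (h : A = ⋃ i, B i) :
    ENNReal.ofReal (m A) = ∑' i, ENNReal.ofReal (m (B i)) := by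
  have : Encodable ι := Encodable.ofCountable ι
  have hB' : ∀ n, (⋃ b ∈ Encodable.decode₂ ι n, B b) ∈ P := fun n =>
    Encodable.iUnion_decode₂_cases hP.empty_mem hB
  have h1 := hm.sigma_additive A (fun n => ⋃ b ∈ Encodable.decode₂ ι n, B b) hA hB'
    (Encodable.iUnion_decode₂_disjoint_on hd) (by rw [Encodable.iUnion_decode₂, h])
  rw [← h1.tsum_eq, ENNReal.ofReal_tsum_of_nonneg (fun n => hm.nonneg (hB' n)) h1.summable]
  exact tsum_iUnion_decode₂ (fun s => ENNReal.ofReal (m s)) (by simp [hm.empty]) B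

noncomputable def IsPremeasure.content {X : Type*} {P : Set (Set X)} {m : Set X → ℝ}
    (hP : IsSemiring P) (hm : IsPremeasure P m) : AddContent ℝ≥0∞ P where
  toFun s := ENNReal.ofReal (m s)
  empty' := by simp [hm.empty]
  sUnion' I hI hd hU := by
    rw [hm.csum hP _ (fun i : I => (i : Set X)) hU (fun i => hI i.2)
      (fun i j hij => hd i.2 j.2 (fun h => hij (Subtype.ext h)))
      (by rw [Set.sUnion_eq_iUnion]; rfl), tsum_fintype]
    exact Finset.sum_coe_sort I (fun u => ENNReal.ofReal (m u))

theorem IsPremeasure.content_apply {X : Type*} {P : Set (Set X)} {m : Set X → ℝ}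
    (hP : IsSemiring P) (hm : IsPremeasure P m) (s : Set X) :
    hm.content hP s = ENNReal.ofReal (m s) := rfl

theorem IsPremeasure.subadd {X : Type*} {P : Set (Set X)} {m : Set X → ℝ}
    (hP : IsSemiring P) (hm : IsPremeasure P m) : (hm.content hP).IsSigmaSubadditive := by
  classical
  intro f hf hU
  have hC := hP.toSet
  have hI : ∀ n, (((Finset.range n).image f : Finset (Set X)) : Set (Set X)) ⊆ P := by
    intro n A hA
    simp only [Finset.coe_image, Set.mem_image] at hA
    obtain ⟨i, -, rfl⟩ := hA
    exact hf i
  let J : ℕ → Finset (Set X) := fun n => hC.disjointOfDiffUnion (hf n) (hI n)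
  have hJ : ∀ n, f n \ ⋃₀ ((Finset.range n).image f : Finset (Set X)) = ⋃₀ (J n : Set (Set X)) :=
    fun n => hC.sdiff_sUnion_eq_sUnion_disjointOfDiffUnion (hf n) (hI n)
  have hmem : ∀ n, ∀ A ∈ J n, ∀ x ∈ A, x ∈ f n ∧ ∀ k < n, x ∉ f k := by
    intro n A hA x hx
    have : x ∈ f n \ ⋃₀ ((Finset.range n).image f : Finset (Set X)) := by
      rw [hJ]; exact ⟨A, hA, hx⟩
    refine ⟨this.1, fun k hk hxk => this.2 ⟨f k, ?_, hxk⟩⟩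
    simp only [Finset.coe_image, Set.mem_image, Finset.coe_range, Set.mem_Iio]
    exact ⟨k, hk, rfl⟩
  have hJP : ∀ n, ∀ A ∈ J n, A ∈ P := fun n A hA =>
    hC.disjointOfDiffUnion_subset (hf n) (hI n) hA
  have key := hm.csum hP (⋃ i, f i) (fun i : (Σ n, J n) => (i.2 : Set X)) hU
    (fun i => hJP i.1 _ i.2.2) (by
      rintro ⟨n, A, hA⟩ ⟨k, B, hB⟩ hne
      simp only [Function.onFun]
      rcases lt_trichotomy n k with h | h | h
      · exact Set.disjoint_left.2 fun x hx hx' => (hmem k B hB x hx').2 n h (hmem n A hA x hx).1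
      · subst h
        refine hC.pairwiseDisjoint_disjointOfDiffUnion (hf n) (hI n) hA hB ?_
        rintro rfl
        exact hne rfl
      · exact Set.disjoint_left.2 fun x hx hx' => (hmem n A hA x hx).2 k h (hmem k B hB x hx').1)
    (by
      ext x
      simp only [Set.mem_iUnion]
      constructor
      · intro hx
        have hx' := hx
        let n := Nat.find hx
        have h1 : x ∈ f n := Nat.find_spec hx
        have h2 : x ∈ f n \ ⋃₀ ((Finset.range n).image f : Finset (Set X)) := by
          refine ⟨h1, ?_⟩
          rintro ⟨A, hA, hxA⟩
          simp only [Finset.coe_image, Set.mem_image, Finset.coe_range, Set.mem_Iio] at hA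
          obtain ⟨k, hk, rfl⟩ := hA
          exact Nat.find_min hx hk hxA
        rw [hJ] at h2
        obtain ⟨A, hA, hxA⟩ := h2
        exact ⟨⟨n, A, hA⟩, hxA⟩
      · rintro ⟨⟨n, A, hA⟩, hx⟩
        exact ⟨n, (hmem n A hA x hx).1⟩)
  rw [IsPremeasure.content_apply, key, ENNReal.tsum_sigma' (fun i : (Σ n, J n) => ENNReal.ofReal (m (i.2 : Set X)))]
  refine ENNReal.tsum_le_tsum fun n => ?_
  rw [tsum_fintype]
  rw [Finset.sum_coe_sort (J n) (fun u => ENNReal.ofReal (m u))]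
  exact sum_addContent_le_of_subset (m := hm.content hP) hC (fun A hA => hJP n A hA)
    (hC.pairwiseDisjoint_disjointOfDiffUnion (hf n) (hI n)) (hf n)
    (fun A hA x hx => (hmem n A hA x hx).1)

theorem exists_measure {X : Type*} {P : Set (Set X)} {m : Set X → ℝ}
    (hP : IsSemiring P) (hm : IsPremeasure P m) :
    ∃ (_ : MeasurableSpace X) (M : Measure X),
      (∀ A ∈ P, MeasurableSet A) ∧ (∀ A ∈ P, M A = ENNReal.ofReal (m A)) ∧
      ∀ N, NullFor P m N ↔ M N = 0 := by
  have hC := hP.toSet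
  have hs := hm.subadd hP
  have hMP : ∀ A ∈ P, (hm.content hP).measureCaratheodory hC hs A = ENNReal.ofReal (m A) :=
    fun A hA => AddContent.measureCaratheodory_eq _ hC hs hA
  refine ⟨_, (hm.content hP).measureCaratheodory hC hs, ?_, hMP, ?_⟩
  · intro A hA
    exact AddContent.isCaratheodory_inducedOuterMeasure_of_mem hC _ hA
  · intro N
    constructor
    · intro hN
      refine nonpos_iff_eq_zero.1 (le_of_forall_pos_le_add fun ε hε => ?_)
      rw [zero_add]
      rcases eq_or_ne ε ⊤ with rfl | hεt
      · exact le_top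
      obtain ⟨B, hB, hsub, L, hL, hlt⟩ := hN ε.toReal (ENNReal.toReal_pos hε.ne' hεt)
      refine (measure_mono hsub).trans ((measure_iUnion_le B).trans ?_)
      simp only [hMP _ (hB _)]
      rw [← ENNReal.ofReal_tsum_of_nonneg (fun n => hm.nonneg (hB n)) hL.summable, hL.tsum_eq]
      exact ENNReal.ofReal_le_of_le_toReal hlt.le
    · intro hN ε hε
      rw [AddContent.measureCaratheodory_eq_inducedOuterMeasure, inducedOuterMeasure,
        OuterMeasure.ofFunction_eq_iInf_mem (P := fun s => s ∈ P) _ _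
          (fun s hs => extend_eq_top _ hs)] at hN
      have hlt := hN.trans_lt (ENNReal.ofReal_pos.2 hε)
      simp only [iInf_lt_iff] at hlt
      obtain ⟨B, hB, hsub, hlt⟩ := hlt
      have he : ∀ n, extend (fun x (_ : x ∈ P) => (hm.content hP) x) (B n)
          = ENNReal.ofReal (m (B n)) := fun n => extend_eq _ (hB n)
      simp only [he] at hlt
      have hsum : Summable fun n => m (B n) := by
        have := ENNReal.summable_toReal hlt.ne_top
        simpa [ENNReal.toReal_ofReal (hm.nonneg (hB _))] using this
      refine ⟨B, hB, hsub, _, hsum.hasSum, ?_⟩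
      rw [← ENNReal.ofReal_tsum_of_nonneg (fun n => hm.nonneg (hB n)) hsum] at hlt
      exact (ENNReal.ofReal_lt_ofReal_iff hε).1 hlt

theorem prod_semiring {X Y : Type*} {P : Set (Set X)} {Q : Set (Set Y)}
    (hP : IsSemiring P) (hQ : IsSemiring Q) : IsSemiring (ProdSemiring P Q) where
  empty_mem := ⟨∅, hP.empty_mem, ∅, hQ.empty_mem, by simp⟩
  inter_mem := by
    rintro _ _ ⟨A, hA, B, hB, rfl⟩ ⟨A', hA', B', hB', rfl⟩
    exact ⟨A ∩ A', hP.inter_mem hA hA', B ∩ B', hQ.inter_mem hB hB', Set.prod_inter_prod⟩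
  diff_eq := by
    rintro _ _ ⟨A, hA, B, hB, rfl⟩ ⟨A', hA', B', hB', rfl⟩
    obtain ⟨n, C, hC, hCd, hCe⟩ := hP.diff_eq hA hA'
    obtain ⟨k, D, hD, hDd, hDe⟩ := hQ.diff_eq hB hB'
    let E : Fin n ⊕ Fin k → Set (X × Y) :=
      Sum.elim (fun i => C i ×ˢ B) (fun j => (A ∩ A') ×ˢ D j)
    have hCA : ∀ i, ∀ x ∈ C i, x ∈ A ∧ x ∉ A' := by
      intro i x hx
      have : x ∈ A \ A' := by rw [hCe]; exact Set.mem_iUnion.2 ⟨i, hx⟩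
      exact this
    have hDB : ∀ i, ∀ x ∈ D i, x ∈ B ∧ x ∉ B' := by
      intro i x hx
      have : x ∈ B \ B' := by rw [hDe]; exact Set.mem_iUnion.2 ⟨i, hx⟩
      exact this
    have hEd : Pairwise (Function.onFun Disjoint E) := by
      rintro (i | i) (j | j) hij
      · exact Set.disjoint_left.2 fun p hp hp' =>
          Set.disjoint_left.1 (hCd (fun h => hij (by rw [h]))) hp.1 hp'.1
      · exact Set.disjoint_left.2 fun p hp hp' => (hCA i _ hp.1).2 hp'.1.2
      · exact Set.disjoint_left.2 fun p hp hp' => (hCA j _ hp'.1).2 hp.1.2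
      · exact Set.disjoint_left.2 fun p hp hp' =>
          Set.disjoint_left.1 (hDd (fun h => hij (by rw [h]))) hp.2 hp'.2
    refine ⟨n + k, fun i => E (finSumFinEquiv.symm i), ?_, ?_, ?_⟩
    · intro i
      beta_reduce
      rcases finSumFinEquiv.symm i with i | i
      · exact ⟨C i, hC i, B, hB, rfl⟩
      · exact ⟨A ∩ A', hP.inter_mem hA hA', D i, hD i, rfl⟩
    · intro i j hij
      exact hEd (fun h => hij (finSumFinEquiv.symm.injective h))
    · rw [finSumFinEquiv.symm.surjective.iUnion_comp E]
      ext ⟨x, y⟩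
      constructor
      · rintro ⟨⟨hx, hy⟩, hn⟩
        by_cases hxA : x ∈ A'
        · have : y ∈ B \ B' := ⟨hy, fun h => hn ⟨hxA, h⟩⟩
          rw [hDe] at this
          obtain ⟨j, hj⟩ := Set.mem_iUnion.1 this
          exact Set.mem_iUnion.2 ⟨Sum.inr j, ⟨hx, hxA⟩, hj⟩
        · have : x ∈ A \ A' := ⟨hx, hxA⟩
          rw [hCe] at this
          obtain ⟨j, hj⟩ := Set.mem_iUnion.1 this
          exact Set.mem_iUnion.2 ⟨Sum.inl j, hj, hy⟩
      · intro h
        obtain ⟨i | i, hi⟩ := Set.mem_iUnion.1 h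
        · exact ⟨⟨(hCA i x hi.1).1, hi.2⟩, fun h => (hCA i x hi.1).2 h.1⟩
        · exact ⟨⟨hi.1.1, (hDB i y hi.2).1⟩, fun h => (hDB i y hi.2).2 h.2⟩

/-- The product set function. -/
noncomputable def prodFun {X Y : Type*} (μ : Set X → ℝ) (ν : Set Y → ℝ) (S : Set (X × Y)) : ℝ :=
  μ (Prod.fst '' S) * ν (Prod.snd '' S)

theorem prodFun_prod {X Y : Type*} {μ : Set X → ℝ} {ν : Set Y → ℝ} (hμ : μ ∅ = 0) (hν : ν ∅ = 0)
    (A : Set X) (B : Set Y) : prodFun μ ν (A ×ˢ B) = μ A * ν B := by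
  unfold prodFun
  rcases A.eq_empty_or_nonempty with rfl | hA
  · simp [hμ]
  rcases B.eq_empty_or_nonempty with rfl | hB
  · simp [hν]
  rw [Set.fst_image_prod _ hB, Set.snd_image_prod hA]

theorem prod_premeasure {X Y : Type*} {P : Set (Set X)} {Q : Set (Set Y)}
    {μ : Set X → ℝ} {ν : Set Y → ℝ} (hP : IsSemiring P) (hQ : IsSemiring Q)
    (hμ : IsPremeasure P μ) (hν : IsPremeasure Q ν) :
    IsPremeasure (ProdSemiring P Q) (prodFun μ ν) where
  nonneg := by
    rintro _ ⟨A, hA, B, hB, rfl⟩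
    rw [prodFun_prod hμ.empty hν.empty]
    exact mul_nonneg (hμ.nonneg hA) (hν.nonneg hB)
  empty := by simp [prodFun, hμ.empty]
  sigma_additive := by
    rintro _ S ⟨A, hA, B, hB, rfl⟩ hS hd hU
    choose C hC D hD hCD using hS
    obtain rfl : S = fun n => C n ×ˢ D n := funext hCD
    simp only [prodFun_prod hμ.empty hν.empty]
    obtain ⟨_, M, hmeas, hM, -⟩ := exists_measure hP hμ
    obtain ⟨_, N, hmeas', hN, -⟩ := exists_measure hQ hν
    have hx : ∀ x, A.indicator (fun _ => N B) x = ∑' n, (C n).indicator (fun _ => N (D n)) x := by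
      intro x
      have h1 : N (Prod.mk x ⁻¹' (A ×ˢ B)) = ∑' n, N (Prod.mk x ⁻¹' (C n ×ˢ D n)) := by
        rw [hU, Set.preimage_iUnion, measure_iUnion]
        · intro i j hij
          exact (hd hij).preimage _
        · intro n
          by_cases hx : x ∈ C n
          · rw [Set.mk_preimage_prod_right hx]; exact hmeas' _ (hD n)
          · rw [Set.mk_preimage_prod_right_eq_empty hx]; exact MeasurableSet.empty
      have h2 : ∀ (A : Set X) (B : Set Y), N (Prod.mk x ⁻¹' (A ×ˢ B))
          = A.indicator (fun _ => N B) x := by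
        intro A B
        by_cases hx : x ∈ A
        · rw [Set.mk_preimage_prod_right hx, Set.indicator_of_mem hx]
        · rw [Set.mk_preimage_prod_right_eq_empty hx, Set.indicator_of_notMem hx, measure_empty]
      simpa only [h2] using h1
    have h3 : ∫⁻ x, A.indicator (fun _ => N B) x ∂M
        = ∑' n, ∫⁻ x, (C n).indicator (fun _ => N (D n)) x ∂M := by
      rw [← lintegral_tsum]
      · exact lintegral_congr hx
      · intro n
        exact (measurable_const.indicator (hmeas _ (hC n))).aemeasurable
    rw [lintegral_indicator_const (hmeas _ hA)] at h3
    simp only [lintegral_indicator_const (hmeas _ (hC _)), hM _ hA, hM _ (hC _), hN _ hB,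
      hN _ (hD _)] at h3
    have h4 : ∀ A ∈ P, ∀ B ∈ Q, ENNReal.ofReal (ν B) * ENNReal.ofReal (μ A)
        = ENNReal.ofReal (μ A * ν B) := by
      intro A hA B hB
      rw [mul_comm, ENNReal.ofReal_mul (hμ.nonneg hA)]
    simp only [h4 _ hA _ hB, h4 _ (hC _) _ (hD _)] at h3
    have hnn : ∀ n, 0 ≤ μ (C n) * ν (D n) := fun n =>
      mul_nonneg (hμ.nonneg (hC n)) (hν.nonneg (hD n))
    have hsum : Summable fun n => μ (C n) * ν (D n) := by
      have := ENNReal.summable_toReal (h3 ▸ ENNReal.ofReal_ne_top)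
      simpa only [ENNReal.toReal_ofReal (hnn _)] using this
    rw [← ENNReal.ofReal_tsum_of_nonneg hnn hsum] at h3
    have := (ENNReal.ofReal_eq_ofReal_iff (mul_nonneg (hμ.nonneg hA) (hν.nonneg hB))
      (tsum_nonneg hnn)).1 h3
    rw [this]
    exact hsum.hasSum

theorem null_section {X Y : Type*} {P : Set (Set X)} {Q : Set (Set Y)}
    {μ : Set X → ℝ} {ν : Set Y → ℝ} (hP : IsSemiring P) (hQ : IsSemiring Q)
    (hμ : IsPremeasure P μ) (hν : IsPremeasure Q ν) {Z : Set (X × Y)}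
    (hZ : NullFor (ProdSemiring P Q) (prodFun μ ν) Z) :
    AEFor P μ (fun x => NullFor Q ν (Prod.mk x ⁻¹' Z)) := by
  obtain ⟨_, M, hmeas, hM, hM0⟩ := exists_measure hP hμ
  obtain ⟨_, N, hmeas', hN, hN0⟩ := exists_measure hQ hν
  choose S hS hsub L hL hlt using fun k : ℕ => hZ (1 / ((k : ℝ) + 1)) (by positivity)
  choose C hC D hD hCD using hS
  obtain rfl : S = fun k n => C k n ×ˢ D k n := funext fun k => funext (hCD k)
  simp only [prodFun_prod hμ.empty hν.empty] at hL
  let F : ℕ → X → ℝ≥0∞ := fun k x => ∑' n, (C k n).indicator (fun _ => N (D k n)) x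
  have hFm : ∀ k, Measurable (F k) := fun k =>
    Measurable.tsum fun n => measurable_const.indicator (hmeas _ (hC k n))
  have hFi : ∀ k, ∫⁻ x, F k x ∂M ≤ ENNReal.ofReal (1 / ((k : ℝ) + 1)) := by
    intro k
    have hnn : ∀ n, 0 ≤ μ (C k n) * ν (D k n) := fun n =>
      mul_nonneg (hμ.nonneg (hC k n)) (hν.nonneg (hD k n))
    rw [lintegral_tsum fun n => (measurable_const.indicator (hmeas _ (hC k n))).aemeasurable]
    refine le_trans (le_of_eq ?_) (ENNReal.ofReal_le_ofReal (hlt k).le)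
    rw [← (hL k).tsum_eq, ENNReal.ofReal_tsum_of_nonneg hnn (hL k).summable]
    refine tsum_congr fun n => ?_
    rw [lintegral_indicator_const (hmeas _ (hC k n)), hM _ (hC k n), hN _ (hD k n), mul_comm,
      ENNReal.ofReal_mul (hμ.nonneg (hC k n))]
  have hinf : ∫⁻ x, ⨅ k, F k x ∂M = 0 := by
    refine nonpos_iff_eq_zero.1 (ge_of_tendsto' (x := atTop)
      (f := fun k : ℕ => ENNReal.ofReal (1 / ((k : ℝ) + 1))) ?_ fun k => ?_)
    · rw [← ENNReal.ofReal_zero]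
      exact ENNReal.tendsto_ofReal tendsto_one_div_add_atTop_nhds_zero_nat
    · exact (lintegral_mono fun x => iInf_le _ k).trans (hFi k)
  rw [lintegral_eq_zero_iff (Measurable.iInf hFm)] at hinf
  refine (hM0 _).2 (ae_iff.1 ?_)
  filter_upwards [hinf] with x hx
  rw [hN0, ← nonpos_iff_eq_zero]
  refine le_trans (le_iInf fun k => ?_) hx.le
  refine (measure_mono (Set.preimage_mono (hsub k))).trans ?_
  rw [Set.preimage_iUnion]
  refine (measure_iUnion_le _).trans (ENNReal.tsum_le_tsum fun n => ?_)
  by_cases hx : x ∈ C k n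
  · rw [Set.mk_preimage_prod_right hx, Set.indicator_of_mem hx]
  · rw [Set.mk_preimage_prod_right_eq_empty hx, Set.indicator_of_notMem hx, measure_empty]

theorem StepIntP.props {X : Type*} {P : Set (Set X)} {m : Set X → ℝ}
    (hm : IsPremeasure P m) {_ : MeasurableSpace X} {M : Measure X}
    (hmeas : ∀ A ∈ P, MeasurableSet A) (hM : ∀ A ∈ P, M A = ENNReal.ofReal (m A))
    {φ : X → ℝ} {v : ℝ} (h : StepIntP P m φ v) :
    Measurable φ ∧ Integrable φ M ∧ ∫ x, φ x ∂M = v := by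
  obtain ⟨n, c, A, hA, hφ, hv⟩ := h
  obtain rfl : φ = fun x => ∑ i, c i * (A i).indicator 1 x := funext hφ
  have hi : ∀ i, Integrable (fun x => c i * (A i).indicator (1 : X → ℝ) x) M := fun i =>
    ((integrable_indicator_iff (hmeas _ (hA i))).2
      (integrableOn_const (by rw [hM _ (hA i)]; exact ENNReal.ofReal_ne_top))).const_mul _
  refine ⟨?_, integrable_finsetSum _ fun i _ => hi i, ?_⟩
  · exact Finset.measurable_sum _ fun i _ =>
      (measurable_one.indicator (hmeas _ (hA i))).const_mul _
  · rw [integral_finsetSum _ fun i _ => hi i, hv]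
    refine Finset.sum_congr rfl fun i _ => ?_
    rw [integral_const_mul, integral_indicator_one (hmeas _ (hA i)), Measure.real, hM _ (hA i),
      ENNReal.toReal_ofReal (hm.nonneg (hA i))]

theorem step_mono {X : Type*} {P : Set (Set X)} {m : Set X → ℝ} (hP : IsSemiring P)
    (hm : IsPremeasure P m) {φ : ℕ → X → ℝ} {v : ℕ → ℝ} (h : ∀ n, StepIntP P m (φ n) (v n))
    (hmono : AEFor P m (fun x => Monotone fun n => φ n x)) : Monotone v := by
  obtain ⟨_, M, hmeas, hM, hM0⟩ := exists_measure hP hm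
  have hmono' : ∀ᵐ x ∂M, Monotone fun n => φ n x := ae_iff.2 ((hM0 _).1 hmono)
  intro i j hij
  have hi := (h i).props hm hmeas hM
  have hj := (h j).props hm hmeas hM
  rw [← hi.2.2, ← hj.2.2]
  refine integral_mono_ae hi.2.1 hj.2.1 ?_
  filter_upwards [hmono'] with x hx using hx hij

theorem AEFor.mono' {X : Type*} {P : Set (Set X)} {m : Set X → ℝ} {p q : X → Prop}
    (h : AEFor P m p) (hpq : ∀ x, p x → q x) : AEFor P m q := by
  intro ε hε
  obtain ⟨B, hB, hs, r⟩ := h ε hε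
  exact ⟨B, hB, fun x hx => hs fun hp => hx (hpq x hp), r⟩

theorem AEFor.and' {X : Type*} {P : Set (Set X)} {m : Set X → ℝ} (hP : IsSemiring P)
    (hm : IsPremeasure P m) {p q : X → Prop}
    (h : AEFor P m p) (h' : AEFor P m q) : AEFor P m (fun x => p x ∧ q x) := by
  obtain ⟨_, M, hmeas, hM, hM0⟩ := exists_measure hP hm
  have h1 : ∀ᵐ x ∂M, p x := ae_iff.2 ((hM0 _).1 h)
  have h2 : ∀ᵐ x ∂M, q x := ae_iff.2 ((hM0 _).1 h')
  exact (hM0 _).2 (ae_iff.1 (h1.and h2))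

theorem R1_finite {X : Type*} {P : Set (Set X)} {m : Set X → ℝ} (hP : IsSemiring P)
    (hm : IsPremeasure P m) {f : X → EReal} {I : EReal} (h : R1IntP P m f I) (hI : I ≠ ⊤) :
    AEFor P m (fun x => f x ≠ ⊤) := by
  obtain ⟨φ, v, hφ, hae, hv⟩ := h
  have hvm := step_mono hP hm hφ (hae.mono' fun x hx => hx.1)
  obtain ⟨_, M, hmeas, hM, hM0⟩ := exists_measure hP hm
  have hae' : ∀ᵐ x ∂M, Monotone (fun n => φ n x) ∧
      Tendsto (fun n => (φ n x : EReal)) atTop (nhds (f x)) := ae_iff.2 ((hM0 _).1 hae)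
  have hvI : ∀ n, (v n : EReal) ≤ I := fun n =>
    Monotone.ge_of_tendsto (f := fun n => (v n : EReal))
      (fun i j hij => EReal.coe_le_coe_iff.2 (hvm hij)) hv n
  have hvr : ∀ n, v n ≤ I.toReal := by
    intro n
    rw [← EReal.coe_le_coe_iff, EReal.coe_toReal hI]
    · exact hvI n
    · rintro rfl
      exact absurd (hvI 0) (by simp)
  have hp := fun n => (hφ n).props hm hmeas hM
  have hlt : ∫⁻ x, ⨆ n, ENNReal.ofReal (φ n x - φ 0 x) ∂M ≤ ENNReal.ofReal (I.toReal - v 0) := by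
    rw [lintegral_iSup']
    · refine iSup_le fun n => ?_
      rw [← ofReal_integral_eq_lintegral_ofReal (f := fun x => φ n x - φ 0 x)
        ((hp n).2.1.sub (hp 0).2.1)]
      · rw [integral_sub (hp n).2.1 (hp 0).2.1, (hp n).2.2, (hp 0).2.2]
        exact ENNReal.ofReal_le_ofReal (sub_le_sub_right (hvr n) _)
      · filter_upwards [hae'] with x hx
        simpa using hx.1 (Nat.zero_le n)
    · intro n
      exact ((hp n).1.sub (hp 0).1).ennreal_ofReal.aemeasurable
    · filter_upwards [hae'] with x hx
      intro i j hij
      exact ENNReal.ofReal_le_ofReal (sub_le_sub_right (hx.1 hij) _)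
  have hfin := ae_lt_top (Measurable.iSup fun n => ((hp n).1.sub (hp 0).1).ennreal_ofReal)
    (hlt.trans_lt ENNReal.ofReal_lt_top).ne
  refine (hM0 _).2 (ae_iff.1 ?_)
  filter_upwards [hae', hfin] with x hx hx'
  change (⨆ n, ENNReal.ofReal (φ n x - φ 0 x)) < ⊤ at hx'
  set K := ⨆ n, ENNReal.ofReal (φ n x - φ 0 x) with hK
  have hle : f x ≤ ((K.toReal + φ 0 x : ℝ) : EReal) := by
    refine le_of_tendsto' hx.2 fun n => ?_
    rw [EReal.coe_le_coe_iff]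
    have h1 : ENNReal.ofReal (φ n x - φ 0 x) ≤ K := le_iSup (fun n => ENNReal.ofReal (φ n x - φ 0 x)) n
    have h2 := (ENNReal.ofReal_le_iff_le_toReal hx'.ne).1 h1
    linarith
  exact (hle.trans_lt (EReal.coe_lt_top _)).ne

theorem step_section {X Y : Type*} {P : Set (Set X)} {Q : Set (Set Y)}
    {μ : Set X → ℝ} {ν : Set Y → ℝ} (hμ : IsPremeasure P μ) (hν : IsPremeasure Q ν)
    {φ : X × Y → ℝ} {v : ℝ} (h : StepIntP (ProdSemiring P Q) (prodFun μ ν) φ v) :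
    ∃ Φ : X → ℝ, StepIntP P μ Φ v ∧ ∀ x, StepIntP Q ν (fun y => φ (x, y)) (Φ x) := by
  classical
  obtain ⟨n, c, S, hS, hφ, hv⟩ := h
  choose C hC D hD hCD using hS
  obtain rfl : S = fun n => C n ×ˢ D n := funext hCD
  simp only [prodFun_prod hμ.empty hν.empty] at hv
  refine ⟨fun x => ∑ i, (c i * ν (D i)) * (C i).indicator 1 x,
    ⟨n, fun i => c i * ν (D i), C, hC, fun x => rfl, ?_⟩, fun x =>
    ⟨n, fun i => c i * (C i).indicator 1 x, D, hD, fun y => ?_, ?_⟩⟩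
  · rw [hv]
    exact Finset.sum_congr rfl fun i _ => by ring
  · beta_reduce
    rw [hφ]
    refine Finset.sum_congr rfl fun i _ => ?_
    by_cases h1 : x ∈ C i <;> by_cases h2 : y ∈ D i <;> simp [Set.indicator, h1, h2]
  · exact Finset.sum_congr rfl fun i _ => by ring

theorem R1_fubini {X Y : Type*} {P : Set (Set X)} {Q : Set (Set Y)}
    {μ : Set X → ℝ} {ν : Set Y → ℝ} (hP : IsSemiring P) (hQ : IsSemiring Q)
    (hμ : IsPremeasure P μ) (hν : IsPremeasure Q ν) {f : X × Y → EReal} {I : EReal}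
    (h : R1IntP (ProdSemiring P Q) (prodFun μ ν) f I) :
    ∃ g : X → EReal, AEFor P μ (fun x => R1IntP Q ν (fun y => f (x, y)) (g x)) ∧
      R1IntP P μ g I := by
  obtain ⟨φ, v, hφ, hae, hv⟩ := h
  choose Φ hΦ hΦs using fun n => step_section hμ hν (hφ n)
  have hsec := null_section hP hQ hμ hν hae
  have hmono : ∀ x, NullFor Q ν (Prod.mk x ⁻¹' {x | ¬ (Monotone (fun n => φ n x) ∧
      Tendsto (fun n => (φ n x : EReal)) atTop (nhds (f x)))}) →
      Monotone fun n => Φ n x := by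
    intro x hx
    refine step_mono hQ hν (fun n => hΦs n x) ?_
    exact AEFor.mono' (p := fun y => Monotone (fun n => φ n (x, y)) ∧
      Tendsto (fun n => (φ n (x, y) : EReal)) atTop (nhds (f (x, y)))) hx fun y hy => hy.1
  have htend : ∀ x, (Monotone fun n => Φ n x) →
      Tendsto (fun n => (Φ n x : EReal)) atTop (nhds (⨆ n, (Φ n x : EReal))) := fun x hx =>
    tendsto_atTop_iSup fun i j hij => EReal.coe_le_coe_iff.2 (hx hij)
  refine ⟨fun x => ⨆ n, (Φ n x : EReal), hsec.mono' fun x hx => ?_, Φ, v, hΦ,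
    hsec.mono' fun x hx => ⟨hmono x hx, htend x (hmono x hx)⟩, hv⟩
  exact ⟨fun n y => φ n (x, y), fun n => Φ n x, fun n => hΦs n x, hx, htend x (hmono x hx)⟩

/-- Fubini–Tonelli theorem for the Riesz construction: the rectangles form a
semiring, `(μ×ν)(A×B) := μ(A)ν(B)` defines a finite measure on it, and for
every `f ∈ R₂(X×Y)` (possibly infinite double integral `J`), for a.e. `x` the
section `f(x,·)` lies in `R₂(Y)`, the partial-integral function lies in
`R₂(X)`, and the successive integral equals `J`. -/
theorem fubini_tonelli {X Y : Type*} (P : Set (Set X)) (Q : Set (Set Y))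
    (μ : Set X → ℝ) (ν : Set Y → ℝ)
    (hP : IsSemiring P) (hQ : IsSemiring Q)
    (hμ : IsPremeasure P μ) (hν : IsPremeasure Q ν) :
    IsSemiring (ProdSemiring P Q) ∧
    ∃ π : Set (X × Y) → ℝ,
      (∀ A ∈ P, ∀ B ∈ Q, π (A ×ˢ B) = μ A * ν B) ∧
      IsPremeasure (ProdSemiring P Q) π ∧
      ∀ (f : X × Y → EReal) (J : EReal),
        R2IntP (ProdSemiring P Q) π f J →
        ∃ g : X → EReal,
          AEFor P μ (fun x => R2IntP Q ν (fun y => f (x, y)) (g x)) ∧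
          R2IntP P μ g J := by
  refine ⟨prod_semiring hP hQ, prodFun μ ν,
    fun A _ B _ => prodFun_prod hμ.empty hν.empty A B, prod_premeasure hP hQ hμ hν, ?_⟩
  rintro f J ⟨f₁, f₂, I₁, I₂, h₁, h₂, hI, hf, rfl⟩
  obtain ⟨g₁, hs₁, hg₁⟩ := R1_fubini hP hQ hμ hν h₁
  obtain ⟨g₂, hs₂, hg₂⟩ := R1_fubini hP hQ hμ hν h₂
  have hsec := null_section hP hQ hμ hν hf
  have hfin : AEFor P μ (fun x => g₁ x ≠ ⊤ ∨ g₂ x ≠ ⊤) := by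
    rcases hI with hI | hI
    · exact (R1_finite hP hμ hg₁ hI).mono' fun x hx => Or.inl hx
    · exact (R1_finite hP hμ hg₂ hI).mono' fun x hx => Or.inr hx
  refine ⟨fun x => g₁ x - g₂ x, ?_, g₁, g₂, I₁, I₂, hg₁, hg₂, hI, ?_, rfl⟩
  · refine (((hs₁.and' hP hμ hs₂).and' hP hμ hfin).and' hP hμ hsec).mono' ?_
    rintro x ⟨⟨⟨h1, h2⟩, h3⟩, h4⟩
    exact ⟨_, _, _, _, h1, h2, h3, h4, rfl⟩
  · intro ε hε
    refine ⟨fun _ => ∅, fun _ => hP.empty_mem, fun x hx => absurd rfl hx, 0, ?_, hε⟩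
    simp [hμ.empty, hasSum_zero]
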